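/- arXiv:1406.1936 — 4 statements merged into one kernel-verified Lean document; each statement's English description precedes it below -/
import Mathlib

section
/- (Backward Baum–Welch equation and smoothing factorization.) Define α_N^N(x) = 1 for all x ∈ S, and backwards for 0 ≤ n < N define α_n^N(x) = (1/c_{n+1})·Σ_v α_{n+1}^N(v) ψ_{n+1}(v) Λ(x,v), where c_{n+1} = Σ_{x'} ψ_{n+1}(x')·(Σ_v Λ(v,x') π_n(v)). Then for every 0 ≤ n ≤ N and every x ∈ S the smoothing mass factorizes as π_{n|N}(x) = α_n^N(x)·π_n(x). -/
open Finset

/-- Gaussian observation likelihood `ψ_n(x) = exp(−(y_n − h(x))²/(2γ²))`. -/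
noncomputable def psi {S : Type*} (h : S → ℝ) (γ : ℝ) (y : ℕ → ℝ) (n : ℕ) (x : S) : ℝ :=
  Real.exp (-(y n - h x) ^ 2 / (2 * γ ^ 2))

/-- Joint weight of a path `(x₀,…,x_n)`:
`w_n(x₀,…,x_n) = p₀(x₀)ψ₀(x₀)·∏_{k=1}^{n} Λ(x_{k−1},x_k)ψ_k(x_k)`. -/
noncomputable def pathWeight {S : Type*} [Fintype S] (Λ : S → S → ℝ) (p₀ : S → ℝ)
    (h : S → ℝ) (γ : ℝ) (y : ℕ → ℝ) (n : ℕ) (p : Fin (n + 1) → S) : ℝ :=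
  p₀ (p 0) * psi h γ y 0 (p 0) *
    ∏ k : Fin n, Λ (p k.castSucc) (p k.succ) * psi h γ y (k + 1) (p k.succ)

/-- Filtering mass `π_n(x)`: total weight of paths ending at `x`, normalized. -/
noncomputable def filterMass {S : Type*} [Fintype S] [DecidableEq S] (Λ : S → S → ℝ)
    (p₀ : S → ℝ) (h : S → ℝ) (γ : ℝ) (y : ℕ → ℝ) (n : ℕ) (x : S) : ℝ :=
  (∑ p : Fin (n + 1) → S, if p (Fin.last n) = x then pathWeight Λ p₀ h γ y n p else 0) /
  (∑ p : Fin (n + 1) → S, pathWeight Λ p₀ h γ y n p)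

/-- Smoothing mass `π_{n|N}(x)`: total weight of length-`N` paths whose `n`-th coordinate is
`x`, normalized. -/
noncomputable def smoothMass {S : Type*} [Fintype S] [DecidableEq S] (Λ : S → S → ℝ)
    (p₀ : S → ℝ) (h : S → ℝ) (γ : ℝ) (y : ℕ → ℝ) (N : ℕ) (i : Fin (N + 1)) (x : S) : ℝ :=
  (∑ p : Fin (N + 1) → S, if p i = x then pathWeight Λ p₀ h γ y N p else 0) /
  (∑ p : Fin (N + 1) → S, pathWeight Λ p₀ h γ y N p)


lemma bw_step {S : Type*} [Fintype S] (Λ : S → S → ℝ) (p₀ : S → ℝ)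
    (h : S → ℝ) (γ : ℝ) (y : ℕ → ℝ) (n : ℕ) (f : (Fin (n + 1) → S) → ℝ) (g : S → ℝ) :
    ∑ p : Fin (n + 2) → S, f (fun i => p i.castSucc) *
        (pathWeight Λ p₀ h γ y (n + 1) p * g (p (Fin.last (n + 1)))) =
      ∑ p : Fin (n + 1) → S, f p * (pathWeight Λ p₀ h γ y n p *
        ∑ v, Λ (p (Fin.last n)) v * psi h γ y (n + 1) v * g v) := by
  rw [← (Fin.snocEquiv (fun _ : Fin (n + 2) => S)).sum_comp, Fintype.sum_prod_type_right]
  refine Finset.sum_congr rfl fun p _ => ?_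
  rw [Finset.mul_sum, Finset.mul_sum]
  refine Finset.sum_congr rfl fun v _ => ?_
  have h0 : (Fin.snoc p v : Fin (n + 2) → S) 0 = p 0 := by
    have := Fin.snoc_castSucc (α := fun _ : Fin (n + 2) => S) v p 0
    simpa using this
  have e : ∀ k : Fin n, (Fin.snoc p v : Fin (n + 2) → S) k.castSucc.succ = p k.succ := by
    intro k
    rw [Fin.succ_castSucc]
    exact Fin.snoc_castSucc (α := fun _ : Fin (n + 2) => S) v p k.succ
  simp only [Fin.snocEquiv, Equiv.coe_fn_mk, pathWeight, Fin.prod_univ_castSucc (n := n),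
    Fin.snoc_castSucc, Fin.snoc_last, h0, e, Fin.succ_last, Fin.val_castSucc, Fin.val_last]
  ring

lemma bw_pos {S : Type*} [Fintype S]
    (Λ : S → S → ℝ) (hΛ_nonneg : ∀ v x, 0 ≤ Λ v x) (hΛ_row : ∀ v, ∑ x, Λ v x = 1)
    (p₀ : S → ℝ) (hp₀_nonneg : ∀ x, 0 ≤ p₀ x) (hp₀_sum : ∑ x, p₀ x = 1)
    (h : S → ℝ) (γ : ℝ) (y : ℕ → ℝ) (n : ℕ) : ∀ (u : S → ℝ), (∀ x, 0 < u x) →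
    0 < ∑ p : Fin (n + 1) → S, pathWeight Λ p₀ h γ y n p * u (p (Fin.last n)) := by
  have key : ∀ (q : S → ℝ), (∀ x, 0 ≤ q x) → ∑ x, q x = 1 → ∀ u : S → ℝ, (∀ x, 0 < u x) →
      0 < ∑ x, q x * u x := by
    intro q hq hs u hu
    obtain ⟨x, -, hx⟩ : ∃ x ∈ Finset.univ, 0 < q x := by
      by_contra! hc
      have := Finset.sum_nonpos hc
      linarith
    exact Finset.sum_pos' (fun i _ => mul_nonneg (hq i) (hu i).le)
      ⟨x, Finset.mem_univ x, mul_pos hx (hu x)⟩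
  have hpsi : ∀ n x, 0 < psi h γ y n x := fun n x => Real.exp_pos _
  induction n with
  | zero =>
    intro u hu
    rw [← (Equiv.funUnique (Fin 1) S).symm.sum_comp]
    have := key p₀ hp₀_nonneg hp₀_sum (fun x => psi h γ y 0 x * u x)
      (fun x => mul_pos (hpsi 0 x) (hu x))
    simpa [pathWeight, mul_assoc] using this
  | succ n ih =>
    intro u hu
    have := bw_step Λ p₀ h γ y n (fun _ => 1) u
    simp only [one_mul] at this
    rw [this]
    refine ih (fun x => ∑ v, Λ x v * psi h γ y (n + 1) v * u v) fun x => ?_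
    have := key (Λ x) (hΛ_nonneg x) (hΛ_row x) (fun v => psi h γ y (n + 1) v * u v)
      (fun v => mul_pos (hpsi _ v) (hu v))
    simpa [mul_assoc] using this

lemma bw_filter {S : Type*} [Fintype S] [DecidableEq S]
    (Λ : S → S → ℝ) (p₀ : S → ℝ) (h : S → ℝ) (γ : ℝ) (y : ℕ → ℝ) (n : ℕ) (u : S → ℝ) :
    ∑ v, u v * filterMass Λ p₀ h γ y n v =
      (∑ p : Fin (n + 1) → S, pathWeight Λ p₀ h γ y n p * u (p (Fin.last n))) /
        ∑ p : Fin (n + 1) → S, pathWeight Λ p₀ h γ y n p := by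
  simp only [filterMass, ← mul_div_assoc, ← Finset.sum_div]
  congr 1
  simp only [Finset.mul_sum]
  rw [Finset.sum_comm]
  refine Finset.sum_congr rfl fun p _ => ?_
  simp [mul_comm]

lemma bw_c {S : Type*} [Fintype S] [DecidableEq S]
    (Λ : S → S → ℝ) (p₀ : S → ℝ) (h : S → ℝ) (γ : ℝ) (y : ℕ → ℝ) (n : ℕ) :
    (∑ x', psi h γ y (n + 1) x' * ∑ v, Λ v x' * filterMass Λ p₀ h γ y n v) =
      (∑ p : Fin (n + 2) → S, pathWeight Λ p₀ h γ y (n + 1) p) /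
        ∑ p : Fin (n + 1) → S, pathWeight Λ p₀ h γ y n p := by
  have h1 := bw_step Λ p₀ h γ y n (fun _ => 1) (fun _ => 1)
  simp only [one_mul, mul_one] at h1
  rw [h1, ← bw_filter Λ p₀ h γ y n (fun x => ∑ v, Λ x v * psi h γ y (n + 1) v)]
  simp only [Finset.mul_sum, Finset.sum_mul]
  rw [Finset.sum_comm]
  refine Finset.sum_congr rfl fun p _ => Finset.sum_congr rfl fun q _ => ?_
  ring

/-- Backward Baum–Welch equation and smoothing factorization: if `α` satisfies `α_N^N ≡ 1`
and the backward recursion `α_n^N(x) = (1/c_{n+1})·Σ_v α_{n+1}^N(v) ψ_{n+1}(v) Λ(x,v)` with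
`c_{n+1} = Σ_{x'} ψ_{n+1}(x')·(Σ_v Λ(v,x') π_n(v))`, then `π_{n|N}(x) = α_n^N(x)·π_n(x)`
for all `0 ≤ n ≤ N` and `x ∈ S`. -/
theorem backward_baum_welch {S : Type*} [Fintype S] [Nonempty S] [DecidableEq S]
    (Λ : S → S → ℝ) (hΛ_nonneg : ∀ v x, 0 ≤ Λ v x) (hΛ_row : ∀ v, ∑ x, Λ v x = 1)
    (p₀ : S → ℝ) (hp₀_nonneg : ∀ x, 0 ≤ p₀ x) (hp₀_sum : ∑ x, p₀ x = 1)
    (h : S → ℝ) (γ : ℝ) (hγ : 0 < γ) (y : ℕ → ℝ) (N : ℕ)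
    (α : ℕ → S → ℝ)
    (hαN : ∀ x, α N x = 1)
    (hα_rec : ∀ n, n < N → ∀ x, α n x =
        (1 / (∑ x', psi h γ y (n + 1) x' * ∑ v, Λ v x' * filterMass Λ p₀ h γ y n v)) *
          ∑ v, α (n + 1) v * psi h γ y (n + 1) v * Λ x v) :
    ∀ n : ℕ, (hn : n ≤ N) → ∀ x : S,
      smoothMass Λ p₀ h γ y N ⟨n, Nat.lt_succ_of_le hn⟩ x
        = α n x * filterMass Λ p₀ h γ y n x := by
  have hZ : ∀ n, 0 < ∑ p : Fin (n + 1) → S, pathWeight Λ p₀ h γ y n p := by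
    intro n
    simpa using bw_pos Λ hΛ_nonneg hΛ_row p₀ hp₀_nonneg hp₀_sum h γ y n (fun _ => 1)
      (fun _ => one_pos)
  intro n hn x
  have main : ∀ j, n + j ≤ N →
      (∑ p : Fin (n + j + 1) → S, (if p ⟨n, by omega⟩ = x then (1 : ℝ) else 0) *
        (pathWeight Λ p₀ h γ y (n + j) p * α (n + j) (p (Fin.last (n + j))))) /
        (∑ p : Fin (n + j + 1) → S, pathWeight Λ p₀ h γ y (n + j) p)
      = α n x * filterMass Λ p₀ h γ y n x := by
    intro j
    induction j with
    | zero =>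
      intro _
      rw [filterMass, ← mul_div_assoc, Finset.mul_sum]
      congr 1
      refine Finset.sum_congr rfl fun p _ => ?_
      change (if p (Fin.last n) = x then (1 : ℝ) else 0) *
        (pathWeight Λ p₀ h γ y n p * α n (p (Fin.last n))) = _
      split_ifs with hp
      · rw [hp]; ring
      · ring
    | succ j ih =>
      intro hj
      rw [← ih (by omega)]
      have hs := bw_step Λ p₀ h γ y (n + j)
        (fun p => if p ⟨n, by omega⟩ = x then (1 : ℝ) else 0) (α (n + j + 1))
      have hc := bw_c Λ p₀ h γ y (n + j)
      have hZ1 := hZ (n + j)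
      have hZ2 := hZ (n + j + 1)
      have hr : ∀ z, ∑ v, Λ z v * psi h γ y (n + j + 1) v * α (n + j + 1) v =
          ((∑ p : Fin (n + j + 2) → S, pathWeight Λ p₀ h γ y (n + j + 1) p) /
            ∑ p : Fin (n + j + 1) → S, pathWeight Λ p₀ h γ y (n + j) p) * α (n + j) z := by
        intro z
        rw [hα_rec (n + j) (by omega) z, hc, ← mul_assoc, mul_one_div_cancel (div_pos hZ2 hZ1).ne',
          one_mul]
        exact Finset.sum_congr rfl fun v _ => by ring
      simp only [hr] at hs
      change (∑ p : Fin (n + j + 2) → S, (if p (Fin.castSucc ⟨n, by omega⟩) = x then (1 : ℝ) else 0) *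
        (pathWeight Λ p₀ h γ y (n + j + 1) p * α (n + j + 1) (p (Fin.last (n + j + 1))))) /
        (∑ p : Fin (n + j + 2) → S, pathWeight Λ p₀ h γ y (n + j + 1) p) = _
      rw [hs, div_eq_div_iff hZ2.ne' hZ1.ne', Finset.sum_mul, Finset.sum_mul]
      refine Finset.sum_congr rfl fun p _ => ?_
      field_simp
  obtain ⟨j, rfl⟩ := Nat.exists_eq_add_of_le hn
  rw [← main j le_rfl, smoothMass]
  congr 1
  refine Finset.sum_congr rfl fun p _ => ?_
  rw [hαN]
  split_ifs <;> simp
end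

section
/- (Correctness of the Viterbi algorithm.) Define φ_0(v) = ψ_0(v)·p_0(v) and, for 1 ≤ n ≤ N, φ_n(v) = ψ_n(v)·max_x (Λ(x,v)·φ_{n−1}(x)). Then: (i) max_v φ_N(v) equals the maximum over all paths (x₀,…,x_N) ∈ S^{N+1} of the joint weight p_0(x₀)ψ_0(x₀)·∏_{n=1}^N Λ(x_{n−1},x_n)ψ_n(x_n); and (ii) if V̂_N is any maximizer of φ_N and, for n = N−1 down to 0, V̂_n is any maximizer of v ↦ Λ(v, V̂_{n+1})·φ_n(v), then the joint weight of the path (V̂_0,…,V̂_N) equals max_v φ_N(v), i.e. the backtracked path is a maximizer of the joint weight over all paths. -/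
open Finset

/-- Joint weight of a path `(x₀,…,x_N)`:
`p₀(x₀)ψ₀(x₀)·∏_{n=1}^N Λ(x_{n−1},x_n)ψ_n(x_n)`. -/
noncomputable def jointWeight {S : Type*} [Fintype S] (Λ : S → S → ℝ) (p₀ : S → ℝ)
    (ψ : ℕ → S → ℝ) (N : ℕ) (p : Fin (N + 1) → S) : ℝ :=
  p₀ (p 0) * ψ 0 (p 0) * ∏ k : Fin N, Λ (p k.castSucc) (p k.succ) * ψ (k + 1) (p k.succ)

/-- The Viterbi value function: `φ_0(v) = ψ_0(v)·p_0(v)` and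
`φ_{n+1}(v) = ψ_{n+1}(v)·max_x (Λ(x,v)·φ_n(x))`. -/
noncomputable def viterbiPhi {S : Type*} [Fintype S] [Nonempty S]
    (Λ : S → S → ℝ) (p₀ : S → ℝ) (ψ : ℕ → S → ℝ) : ℕ → S → ℝ
  | 0 => fun v => ψ 0 v * p₀ v
  | (n + 1) => fun v => ψ (n + 1) v *
      Finset.univ.sup' Finset.univ_nonempty (fun x => Λ x v * viterbiPhi Λ p₀ ψ n x)

theorem jw_succ {S : Type*} [Fintype S] (Λ : S → S → ℝ) (p₀ : S → ℝ)
    (ψ : ℕ → S → ℝ) (N : ℕ) (p : Fin (N + 2) → S) :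
    jointWeight Λ p₀ ψ (N + 1) p = jointWeight Λ p₀ ψ N (fun i => p i.castSucc) *
      (Λ (p (Fin.last N).castSucc) (p (Fin.last (N + 1))) * ψ (N + 1) (p (Fin.last (N + 1)))) := by
  unfold jointWeight
  rw [Fin.prod_univ_castSucc, ← mul_assoc]
  rfl

theorem jw_le {S : Type*} [Fintype S] [Nonempty S]
    (Λ : S → S → ℝ) (hΛ : ∀ v x, 0 ≤ Λ v x) (p₀ : S → ℝ)
    (ψ : ℕ → S → ℝ) (hψ : ∀ n x, 0 ≤ ψ n x) (N : ℕ) :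
    ∀ p : Fin (N + 1) → S, jointWeight Λ p₀ ψ N p ≤ viterbiPhi Λ p₀ ψ N (p (Fin.last N)) := by
  induction N with
  | zero => intro p; simp [jointWeight, viterbiPhi, mul_comm]
  | succ N ih =>
    intro p
    rw [jw_succ]
    have h1 := ih (fun i => p i.castSucc)
    have h2 := Finset.le_sup' (fun x => Λ x (p (Fin.last (N + 1))) * viterbiPhi Λ p₀ ψ N x)
      (Finset.mem_univ (p (Fin.last N).castSucc))
    have h3 := mul_le_mul_of_nonneg_left h2 (hψ (N + 1) (p (Fin.last (N + 1))))
    have h4 := mul_le_mul_of_nonneg_right h1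
      (mul_nonneg (hΛ (p (Fin.last N).castSucc) (p (Fin.last (N + 1))))
        (hψ (N + 1) (p (Fin.last (N + 1)))))
    refine h4.trans (le_trans (le_of_eq ?_) h3)
    ring

theorem jw_eq {S : Type*} [Fintype S] [Nonempty S]
    (Λ : S → S → ℝ) (p₀ : S → ℝ) (ψ : ℕ → S → ℝ) (N : ℕ) :
    ∀ V : Fin (N + 1) → S,
      (∀ n : Fin N,
          Λ (V n.castSucc) (V n.succ) * viterbiPhi Λ p₀ ψ (n : ℕ) (V n.castSucc)
            = Finset.univ.sup' Finset.univ_nonempty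
                (fun v => Λ v (V n.succ) * viterbiPhi Λ p₀ ψ (n : ℕ) v)) →
      jointWeight Λ p₀ ψ N V = viterbiPhi Λ p₀ ψ N (V (Fin.last N)) := by
  induction N with
  | zero => intro p _; simp [jointWeight, viterbiPhi, mul_comm]
  | succ N ih =>
    intro V hV
    rw [jw_succ, ih (fun i => V i.castSucc) (fun n => hV n.castSucc)]
    have h := hV (Fin.last N)
    simp only [Fin.val_last, Fin.succ_last] at h
    simp only [viterbiPhi]
    rw [← h]
    ring

theorem exists_back {S : Type*} [Fintype S] [Nonempty S]
    (Λ : S → S → ℝ) (p₀ : S → ℝ) (ψ : ℕ → S → ℝ) (N : ℕ) :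
    ∀ v : S, ∃ p : Fin (N + 1) → S, p (Fin.last N) = v ∧
      jointWeight Λ p₀ ψ N p = viterbiPhi Λ p₀ ψ N v := by
  induction N with
  | zero => intro v; exact ⟨fun _ => v, rfl, by simp [jointWeight, viterbiPhi, mul_comm]⟩
  | succ N ih =>
    intro v
    obtain ⟨x, -, hx⟩ := Finset.exists_mem_eq_sup' Finset.univ_nonempty
      (fun x => Λ x v * viterbiPhi Λ p₀ ψ N x)
    obtain ⟨p, hp, hw⟩ := ih x
    refine ⟨Fin.snoc (α := fun _ => S) p v, by simp, ?_⟩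
    rw [jw_succ]
    simp only [Fin.snoc_castSucc, Fin.snoc_last, viterbiPhi]
    rw [hx, hw, hp]
    ring

/-- Correctness of the Viterbi algorithm: (i) `max_v φ_N(v)` equals the maximal joint weight
over all paths; (ii) any backtracked path `V̂` (with `V̂_N` a maximizer of `φ_N` and each `V̂_n`
a maximizer of `v ↦ Λ(v, V̂_{n+1})·φ_n(v)`) achieves joint weight `max_v φ_N(v)`, hence is a
maximizer of the joint weight over all paths. -/
theorem viterbi_correct {S : Type*} [Fintype S] [Nonempty S]
    (Λ : S → S → ℝ) (hΛ : ∀ v x, 0 ≤ Λ v x)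
    (p₀ : S → ℝ) (hp₀ : ∀ x, 0 ≤ p₀ x)
    (ψ : ℕ → S → ℝ) (hψ : ∀ n x, 0 ≤ ψ n x) (N : ℕ) :
    (Finset.univ.sup' Finset.univ_nonempty (viterbiPhi Λ p₀ ψ N)
      = Finset.univ.sup' Finset.univ_nonempty
          (fun p : Fin (N + 1) → S => jointWeight Λ p₀ ψ N p))
    ∧ ∀ V : Fin (N + 1) → S,
        viterbiPhi Λ p₀ ψ N (V (Fin.last N))
            = Finset.univ.sup' Finset.univ_nonempty (viterbiPhi Λ p₀ ψ N) →
        (∀ n : Fin N,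
          Λ (V n.castSucc) (V n.succ) * viterbiPhi Λ p₀ ψ (n : ℕ) (V n.castSucc)
            = Finset.univ.sup' Finset.univ_nonempty
                (fun v => Λ v (V n.succ) * viterbiPhi Λ p₀ ψ (n : ℕ) v)) →
        jointWeight Λ p₀ ψ N V
          = Finset.univ.sup' Finset.univ_nonempty (viterbiPhi Λ p₀ ψ N) := by
  refine ⟨le_antisymm ?_ ?_, fun V h1 h2 => (jw_eq Λ p₀ ψ N V h2).trans h1⟩
  · refine Finset.sup'_le _ _ fun v _ => ?_
    obtain ⟨p, -, hw⟩ := exists_back Λ p₀ ψ N v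
    rw [← hw]
    exact Finset.le_sup' (fun p : Fin (N + 1) → S => jointWeight Λ p₀ ψ N p) (Finset.mem_univ p)
  · refine Finset.sup'_le _ _ fun p _ => ?_
    exact (jw_le Λ hΛ p₀ ψ hψ N p).trans (Finset.le_sup' _ (Finset.mem_univ _))
end

section
/- (Explicit solution and stability of the Kalman–Bucy Riccati equation with constant coefficients.) Let a, σ, h, γ, Σ₀ ∈ ℝ with γ > 0, σ > 0, h ≠ 0 and Σ₀ ≥ 0. Set r = γ·√(a²γ² + h²σ²), α₁ = (aγ² − r)/h², α₂ = (aγ² + r)/h², assume Σ₀ ≠ α₂, and set K = (Σ₀ − α₁)/(Σ₀ − α₂) and λ = (h²/γ²)·(α₂ − α₁). Define Σ : ℝ → ℝ by Σ(t) = (α₁ − K·α₂·e^{λt}) / (1 − K·e^{λt}). Then: (i) 1 − K·e^{λt} ≠ 0 for all t ≥ 0; (ii) Σ(0) = Σ₀; (iii) for all t ≥ 0, Σ is differentiable at t with Σ′(t) = 2a·Σ(t) − (h²/γ²)·Σ(t)² + σ²; and (iv) Σ(t) → α₂ as t → ∞. -/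
open Real Filter Topology

/-- Explicit solution and stability of the Kalman–Bucy Riccati equation with constant
coefficients: with `r = γ√(a²γ² + h²σ²)`, `α₁ = (aγ² − r)/h²`, `α₂ = (aγ² + r)/h²`,
`K = (S₀ − α₁)/(S₀ − α₂)`, `λ = (h²/γ²)(α₂ − α₁)`, the function
`Σ(t) = (α₁ − Kα₂e^{λt})/(1 − Ke^{λt})` has nonvanishing denominator on `t ≥ 0`, starts at
`S₀`, solves `Σ′ = 2aΣ − (h²/γ²)Σ² + σ²`, and converges to `α₂` as `t → ∞`. -/
theorem riccati_explicit_solution_and_stability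
    (a σ h γ S₀ : ℝ) (hγ : 0 < γ) (hσ : 0 < σ) (hh : h ≠ 0) (hS₀ : 0 ≤ S₀)
    (r α₁ α₂ K lam : ℝ)
    (hr : r = γ * Real.sqrt (a ^ 2 * γ ^ 2 + h ^ 2 * σ ^ 2))
    (hα₁ : α₁ = (a * γ ^ 2 - r) / h ^ 2)
    (hα₂ : α₂ = (a * γ ^ 2 + r) / h ^ 2)
    (hne : S₀ ≠ α₂)
    (hK : K = (S₀ - α₁) / (S₀ - α₂))
    (hlam : lam = (h ^ 2 / γ ^ 2) * (α₂ - α₁))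
    (Sg : ℝ → ℝ)
    (hSg : ∀ t, Sg t = (α₁ - K * α₂ * Real.exp (lam * t)) / (1 - K * Real.exp (lam * t))) :
    (∀ t ≥ (0 : ℝ), 1 - K * Real.exp (lam * t) ≠ 0)
    ∧ Sg 0 = S₀
    ∧ (∀ t ≥ (0 : ℝ), HasDerivAt Sg (2 * a * Sg t - (h ^ 2 / γ ^ 2) * (Sg t) ^ 2 + σ ^ 2) t)
    ∧ Tendsto Sg atTop (𝓝 α₂) := by
  have hh2 : 0 < h ^ 2 := by positivity
  have hrpos : 0 < r := by rw [hr]; positivity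
  have hr2 : r ^ 2 = γ ^ 2 * (a ^ 2 * γ ^ 2 + h ^ 2 * σ ^ 2) := by
    rw [hr, mul_pow, Real.sq_sqrt (by positivity)]
  obtain ⟨c, hc⟩ : ∃ c, c = h ^ 2 / γ ^ 2 := ⟨_, rfl⟩
  have hcpos : 0 < c := by rw [hc]; positivity
  have hsum : c * (α₁ + α₂) = 2 * a := by
    rw [hc, hα₁, hα₂]; field_simp; ring
  have hprod : c * (α₁ * α₂) = -σ ^ 2 := by
    have : α₁ * α₂ = ((a * γ ^ 2) ^ 2 - r ^ 2) / (h ^ 2) ^ 2 := by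
      rw [hα₁, hα₂]; field_simp; ring
    rw [this, hr2, hc]; field_simp; ring
  have hD : α₁ < α₂ := by
    rw [hα₁, hα₂]
    gcongr
    linarith
  rw [← hc] at hlam ⊢
  clear hα₁ hα₂ hr hr2
  have hneg : α₁ < 0 := by
    by_contra hcon
    push Not at hcon
    have : 0 ≤ c * (α₁ * α₂) := mul_nonneg hcpos.le (mul_nonneg hcon (hcon.trans hD.le))
    have : 0 < σ ^ 2 := by positivity
    linarith
  have hlpos : 0 < lam := by rw [hlam]; exact mul_pos hcpos (by linarith)
  have hsub : S₀ - α₂ ≠ 0 := sub_ne_zero.mpr hne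
  have hKne : K ≠ 0 := by rw [hK]; exact div_ne_zero (by linarith) hsub
  have h1 : ∀ t ≥ (0 : ℝ), 1 - K * Real.exp (lam * t) ≠ 0 := by
    intro t ht
    have hE : 1 ≤ Real.exp (lam * t) := Real.one_le_exp (by positivity)
    rcases lt_or_gt_of_ne hne with hl | hl
    · have : K < 0 := by rw [hK]; exact div_neg_of_pos_of_neg (by linarith) (by linarith)
      nlinarith
    · have : 1 < K := by rw [hK, one_lt_div (by linarith)]; linarith
      nlinarith
  have hform : ∀ t, 1 - K * Real.exp (lam * t) ≠ 0 →
      Sg t = α₂ + (α₁ - α₂) / (1 - K * Real.exp (lam * t)) := by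
    intro t ht
    rw [hSg]; field_simp; ring
  refine ⟨h1, ?_, ?_, ?_⟩
  · have h0 := h1 0 le_rfl
    rw [hform 0 h0]
    have e : 1 - K * Real.exp (lam * 0) = (α₁ - α₂) / (S₀ - α₂) := by
      rw [hK]; simp; field_simp; ring
    have : α₁ - α₂ ≠ 0 := by linarith
    rw [e]; field_simp; ring
  · intro t ht
    have hd := h1 t ht
    have hE : HasDerivAt (fun t => Real.exp (lam * t)) (Real.exp (lam * t) * lam) t := by
      simpa using ((hasDerivAt_id t).const_mul lam).exp
    have hN := (hE.const_mul (K * α₂)).const_sub α₁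
    have hDn := (hE.const_mul K).const_sub 1
    have hq := hN.div hDn hd
    have hfun : Sg = (fun t => α₁ - K * α₂ * Real.exp (lam * t)) /
        (fun t => 1 - K * Real.exp (lam * t)) := by
      funext s; simp [hSg]
    rw [← hfun] at hq
    refine hq.congr_deriv (Eq.symm ?_)
    have e : 2 * a * Sg t - c * Sg t ^ 2 + σ ^ 2 = -c * (Sg t - α₁) * (Sg t - α₂) := by
      linear_combination (-Sg t) * hsum + hprod
    rw [e, hSg t, hlam]
    rw [hlam] at hd
    generalize Real.exp (c * (α₂ - α₁) * t) = E at *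
    field_simp
    ring
  · have hE : Tendsto (fun t => Real.exp (lam * t)) atTop atTop :=
      Real.tendsto_exp_atTop.comp (tendsto_id.const_mul_atTop hlpos)
    have hI : Tendsto (fun t => (Real.exp (lam * t))⁻¹) atTop (𝓝 0) :=
      tendsto_inv_atTop_zero.comp hE
    have hlim : Tendsto (fun t => (α₁ * (Real.exp (lam * t))⁻¹ - K * α₂) /
        ((Real.exp (lam * t))⁻¹ - K)) atTop (𝓝 ((α₁ * 0 - K * α₂) / (0 - K))) :=
      ((hI.const_mul α₁).sub_const _).div (hI.sub_const K) (by simpa using hKne)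
    have e : (α₁ * 0 - K * α₂) / (0 - K) = α₂ := by field_simp; ring
    rw [e] at hlim
    refine hlim.congr fun t => ?_
    rw [hSg]
    have hp := (Real.exp_pos (lam * t)).ne'
    rw [← mul_div_mul_right _ _ hp]
    congr 1 <;> field_simp
end

section
/- (Positivity-preserving implicit Alfonsi scheme for the CIR process.) Let ν > 0, x̄ > 0, γ ≥ 0, Δt ≥ 0 with ν·Δt ≤ 1 and γ² ≤ 2·ν·x̄, and let x ≥ 0 and b ∈ ℝ. Set D = (1 − ν·Δt)·x + (ν·x̄ − γ²/2)·Δt and s = (γ·b + √(γ²·b² + 4·D))/2. Then D ≥ 0, s ≥ 0, and s² = (1 − ν·Δt)·x + (ν·x̄ − γ²/2)·Δt + γ·s·b; that is, X_{n+1} := s² is a nonnegative solution of the implicit discretization X_{n+1} = X_n(1 − νΔt) + (νx̄ − γ²/2)Δt + γ·√(X_{n+1})·ΔB_n with X_n = x and ΔB_n = b. -/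
/-- Positivity-preserving implicit Alfonsi scheme for the CIR process: under the Feller-type
condition `γ² ≤ 2νx̄` and `νΔt ≤ 1`, the quantity
`s = (γb + √(γ²b² + 4D))/2` with `D = (1 − νΔt)x + (νx̄ − γ²/2)Δt` is a nonnegative root of
the implicit step, i.e. `D ≥ 0`, `s ≥ 0`, and
`s² = (1 − νΔt)x + (νx̄ − γ²/2)Δt + γ·s·b`. -/
theorem alfonsi_implicit_scheme_positive
    (ν xbar γ Δt x b : ℝ)
    (hν : 0 < ν) (hxbar : 0 < xbar) (hγ : 0 ≤ γ) (hΔt : 0 ≤ Δt)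
    (hstep : ν * Δt ≤ 1) (hFeller : γ ^ 2 ≤ 2 * ν * xbar) (hx : 0 ≤ x) :
    0 ≤ (1 - ν * Δt) * x + (ν * xbar - γ ^ 2 / 2) * Δt
    ∧ 0 ≤ (γ * b + Real.sqrt (γ ^ 2 * b ^ 2 +
        4 * ((1 - ν * Δt) * x + (ν * xbar - γ ^ 2 / 2) * Δt))) / 2
    ∧ ((γ * b + Real.sqrt (γ ^ 2 * b ^ 2 +
        4 * ((1 - ν * Δt) * x + (ν * xbar - γ ^ 2 / 2) * Δt))) / 2) ^ 2
      = (1 - ν * Δt) * x + (ν * xbar - γ ^ 2 / 2) * Δt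
        + γ * ((γ * b + Real.sqrt (γ ^ 2 * b ^ 2 +
            4 * ((1 - ν * Δt) * x + (ν * xbar - γ ^ 2 / 2) * Δt))) / 2) * b := by
  have hD : 0 ≤ (1 - ν * Δt) * x + (ν * xbar - γ ^ 2 / 2) * Δt :=
    add_nonneg (mul_nonneg (by linarith) hx) (mul_nonneg (by linarith) hΔt)
  generalize (1 - ν * Δt) * x + (ν * xbar - γ ^ 2 / 2) * Δt = D at hD ⊢
  have hE : 0 ≤ γ ^ 2 * b ^ 2 + 4 * D := by positivity
  have hsq := Real.sq_sqrt hE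
  have hle : -(γ * b) ≤ Real.sqrt (γ ^ 2 * b ^ 2 + 4 * D) := by
    apply Real.le_sqrt_of_sq_le
    nlinarith
  refine ⟨hD, by linarith, ?_⟩
  linear_combination hsq / 4
end
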